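/- Under the hypotheses of Lemma 3.7 with additionally sᵀM₂s = 0 and rᵀM₀r ≠ 0, if b(z) = z²(s + α r) for some scalar α, then the power series solution t(z) of M(z)t(z) = b(z) has leading coefficient t₀ = −(sᵀs)(rᵀM₀r) / ((sᵀM₁r)(rᵀM₁s)) · s, which is nonzero. -/

import Mathlib

open Matrix

/-- Geometric growth of the coefficients. -/
def Geo (f : PowerSeries ℂ) : Prop :=
  ∃ K R : ℝ, 0 < K ∧ 1 ≤ R ∧ ∀ n, ‖PowerSeries.coeff n f‖ ≤ K * R ^ n

lemma Geo.of_bound {f : PowerSeries ℂ} {C ρ : ℝ} (hρ : 0 < ρ)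
    (h : ∀ n, ‖PowerSeries.coeff n f‖ ≤ C / ρ ^ n) : Geo f := by
  refine ⟨|C| + 1, max 1 ρ⁻¹, by positivity, le_max_left _ _, fun n => (h n).trans ?_⟩
  rw [div_eq_mul_inv, ← inv_pow]
  have h1 : ρ⁻¹ ^ n ≤ (max 1 ρ⁻¹) ^ n := pow_le_pow_left₀ (by positivity) (le_max_right _ _) n
  have h2 : C ≤ |C| + 1 := by linarith [le_abs_self C]
  exact mul_le_mul h2 h1 (by positivity) (by positivity)

lemma Geo.add {f g : PowerSeries ℂ} (hf : Geo f) (hg : Geo g) : Geo (f + g) := by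
  obtain ⟨K, R, hK, hR, h⟩ := hf
  obtain ⟨L, S, hL, hS, h'⟩ := hg
  refine ⟨K + L, max R S, by positivity, le_max_of_le_left hR, fun n => ?_⟩
  rw [map_add]
  have h1 : R ^ n ≤ (max R S) ^ n := pow_le_pow_left₀ (by positivity) (le_max_left _ _) n
  have h2 : S ^ n ≤ (max R S) ^ n := pow_le_pow_left₀ (by positivity) (le_max_right _ _) n
  calc _ ≤ _ := norm_add_le _ _
    _ ≤ K * R ^ n + L * S ^ n := add_le_add (h n) (h' n)
    _ ≤ K * (max R S) ^ n + L * (max R S) ^ n := by gcongr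
    _ = _ := by ring

lemma Geo.neg {f : PowerSeries ℂ} (hf : Geo f) : Geo (-f) := by
  obtain ⟨K, R, hK, hR, h⟩ := hf
  exact ⟨K, R, hK, hR, fun n => by rw [map_neg, norm_neg]; exact h n⟩

lemma Geo.sub {f g : PowerSeries ℂ} (hf : Geo f) (hg : Geo g) : Geo (f - g) := by
  rw [sub_eq_add_neg]; exact hf.add hg.neg

lemma Geo.const (a : ℂ) : Geo (PowerSeries.C a) := by
  refine ⟨‖a‖ + 1, 1, by positivity, le_rfl, fun n => ?_⟩
  rw [PowerSeries.coeff_C]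
  split_ifs <;> simp
  positivity

lemma Geo.mul {f g : PowerSeries ℂ} (hf : Geo f) (hg : Geo g) : Geo (f * g) := by
  obtain ⟨K, R, hK, hR, h⟩ := hf
  obtain ⟨L, S, hL, hS, h'⟩ := hg
  have hM : 1 ≤ max R S := le_max_of_le_left hR
  refine ⟨K * L, 2 * max R S, by positivity, by linarith, fun n => ?_⟩
  rw [PowerSeries.coeff_mul]
  calc _ ≤ ∑ p ∈ Finset.HasAntidiagonal.antidiagonal n, K * L * (max R S) ^ n := by
        refine norm_sum_le_of_le _ fun p hp => ?_
        rw [Finset.HasAntidiagonal.mem_antidiagonal] at hp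
        rw [norm_mul]
        have h1 : R ^ p.1 ≤ (max R S) ^ p.1 :=
          pow_le_pow_left₀ (by positivity) (le_max_left _ _) _
        have h2 : S ^ p.2 ≤ (max R S) ^ p.2 :=
          pow_le_pow_left₀ (by positivity) (le_max_right _ _) _
        calc _ ≤ (K * R ^ p.1) * (L * S ^ p.2) :=
              mul_le_mul (h _) (h' _) (norm_nonneg _) (by positivity)
          _ ≤ (K * (max R S) ^ p.1) * (L * (max R S) ^ p.2) := by gcongr
          _ = _ := by rw [← hp, pow_add]; ring
    _ = (n + 1) * (K * L * (max R S) ^ n) := by simp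
    _ ≤ 2 ^ n * (K * L * (max R S) ^ n) := by
        have : (n : ℝ) + 1 ≤ 2 ^ n := by exact_mod_cast Nat.lt_two_pow_self
        gcongr
    _ = _ := by rw [mul_pow]; ring

lemma Geo.inv {f : PowerSeries ℂ} (hf : Geo f) (h0 : PowerSeries.constantCoeff f ≠ 0) :
    Geo f⁻¹ := by
  obtain ⟨K, R, hK, hR, h⟩ := hf
  set a : ℝ := ‖(PowerSeries.constantCoeff f)⁻¹‖ with ha
  have ha0 : 0 < a := by rw [ha, norm_pos_iff]; exact inv_ne_zero h0
  have haK : 0 < a * K := by positivity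
  refine ⟨a, R * (1 + a * K), ha0, by nlinarith, fun n => ?_⟩
  set S := R * (1 + a * K) with hS
  induction n using Nat.strong_induction_on with
  | _ n ih =>
    rcases Nat.eq_zero_or_pos n with rfl | hn
    · rw [PowerSeries.coeff_zero_eq_constantCoeff_apply, PowerSeries.constantCoeff_inv]
      simp [ha]
    · obtain ⟨m, rfl⟩ : ∃ m, n = m + 1 := ⟨n - 1, by omega⟩
      have e : PowerSeries.coeff (m+1) (f * f⁻¹) = 0 := by
        rw [PowerSeries.mul_inv_cancel _ h0, PowerSeries.coeff_one]; simp
      rw [PowerSeries.coeff_mul, Finset.Nat.sum_antidiagonal_eq_sum_range_succ_mk,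
        Finset.sum_range_succ'] at e
      simp only [Nat.add_sub_add_right, Nat.sub_zero,
        PowerSeries.coeff_zero_eq_constantCoeff_apply] at e
      have e2 : PowerSeries.coeff (m+1) f⁻¹ = -((PowerSeries.constantCoeff f)⁻¹ *
          ∑ k ∈ Finset.range (m+1), PowerSeries.coeff (k+1) f * PowerSeries.coeff (m-k) f⁻¹) := by
        field_simp
        linear_combination e
      rw [e2, norm_neg, norm_mul, ← ha]
      refine mul_le_mul_of_nonneg_left ?_ ha0.le
      have hS0 : 0 < S := by positivity
      calc _ ≤ ∑ k ∈ Finset.range (m+1), (K * R ^ (k+1)) * (a * S ^ (m-k)) := by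
            refine norm_sum_le_of_le _ fun k hk => ?_
            rw [norm_mul]
            exact mul_le_mul (h _) (ih _ (by omega)) (norm_nonneg _) (by positivity)
        _ = (∑ k ∈ Finset.range (m+1), R ^ k * S ^ (m + 1 - 1 -k)) * (S - R) := by
            rw [Finset.sum_mul]
            refine Finset.sum_congr rfl fun k _ => ?_
            rw [show S - R = R * (a * K) by rw [hS]; ring, Nat.add_sub_cancel]
            ring
        _ = S ^ (m+1) - R ^ (m+1) := by
            have := (Commute.all R S).geom_sum₂_mul (m+1)
            linarith
        _ ≤ _ := by have : 0 < R ^ (m+1) := by positivity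
                    linarith

lemma Geo.of_X_pow_mul {f : PowerSeries ℂ} {k : ℕ} (hf : Geo (PowerSeries.X ^ k * f)) :
    Geo f := by
  obtain ⟨K, R, hK, hR, h⟩ := hf
  refine ⟨K * R ^ k, R, by positivity, hR, fun n => ?_⟩
  have := h (n + k)
  rw [PowerSeries.coeff_X_pow_mul] at this
  refine this.trans (le_of_eq ?_)
  rw [pow_add]; ring

lemma perp_aux {a b c d : ℂ} (h : a ≠ 0 ∨ b ≠ 0) (h' : c * a + d * b = 0) :
    ∃ l : ℂ, c = -l * b ∧ d = l * a := by
  by_cases ha : a = 0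
  · have hb : b ≠ 0 := by tauto
    subst ha
    have : d = 0 := by simpa [hb] using h'
    exact ⟨-c / b, by field_simp, by simp [this]⟩
  · refine ⟨d / a, ?_, by field_simp⟩
    field_simp
    linear_combination h'

/-- Case (ii) of Lemma 3.7: with additionally `sᵀM₂s = 0`, `rᵀM₀r ≠ 0`, and
`b(z) = z²(s + α r)`, the power-series solution of `M(z)t(z) = b(z)` has
nonzero leading coefficient
`t₀ = −(sᵀs)(rᵀM₀r) / ((sᵀM₁r)(rᵀM₁s)) • s`. -/
theorem stmt_16 (M : ℕ → Matrix (Fin 2) (Fin 2) ℂ)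
    (s r : Fin 2 → ℂ) (hs : s ≠ 0) (hr : r ≠ 0)
    (hMconv : ∃ C ρ : ℝ, 0 < ρ ∧ ∀ n i j, ‖M n i j‖ ≤ C / ρ ^ n)
    (hM0ne : M 0 ≠ 0)
    (hnull : ∀ v, (M 0).mulVec v = 0 ↔ ∃ c : ℂ, v = c • s)
    (hran : ∀ v, (∃ u, (M 0).mulVec u = v) ↔ ∃ c : ℂ, v = c • r)
    (hsr : s ⬝ᵥ r = 0)
    (hsM1s : s ⬝ᵥ (M 1).mulVec s = 0)
    (hM0inv : (!![s ⬝ᵥ (M 2).mulVec s, s ⬝ᵥ (M 1).mulVec r;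
                 r ⬝ᵥ (M 1).mulVec s, r ⬝ᵥ (M 0).mulVec r]).det ≠ 0)
    (hsM2s : s ⬝ᵥ (M 2).mulVec s = 0)
    (hrM0r : r ⬝ᵥ (M 0).mulVec r ≠ 0)
    (α : ℂ) (b : ℕ → Fin 2 → ℂ)
    (hb : b = fun n => if n = 2 then s + α • r else 0) :
    ∃ t : ℕ → Fin 2 → ℂ,
      (∃ C ρ : ℝ, 0 < ρ ∧ ∀ n i, ‖t n i‖ ≤ C / ρ ^ n) ∧
      (∀ n, ∑ l ∈ Finset.range (n + 1), (M l).mulVec (t (n - l)) = b n) ∧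
      t 0 = (-((s ⬝ᵥ s) * (r ⬝ᵥ (M 0).mulVec r))
              / ((s ⬝ᵥ (M 1).mulVec r) * (r ⬝ᵥ (M 1).mulVec s))) • s ∧
      t 0 ≠ 0 := by

  obtain ⟨C, ρ, hρ, hC⟩ := hMconv
  have hs' : s 0 ≠ 0 ∨ s 1 ≠ 0 := by
    by_contra hc
    push Not at hc
    exact hs (by ext i; fin_cases i <;> simp [hc.1, hc.2])
  obtain ⟨l, hl0, hl1⟩ : ∃ l : ℂ, r 0 = -l * s 1 ∧ r 1 = l * s 0 := by
    refine perp_aux hs' ?_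
    simp [dotProduct, Fin.sum_univ_two] at hsr
    linear_combination hsr
  have hl : l ≠ 0 := by
    rintro rfl
    exact hr (by ext i; fin_cases i <;> simp [hl0, hl1])
  obtain ⟨c0, hc0⟩ := (hran _).1 ⟨![1, 0], rfl⟩
  obtain ⟨c1, hc1⟩ := (hran _).1 ⟨![0, 1], rfl⟩
  have h00 : M 0 0 0 = c0 * r 0 := by
    simpa [mulVec, dotProduct, Fin.sum_univ_two] using congrFun hc0 0
  have h10 : M 0 1 0 = c0 * r 1 := by
    simpa [mulVec, dotProduct, Fin.sum_univ_two] using congrFun hc0 1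
  have h01 : M 0 0 1 = c1 * r 0 := by
    simpa [mulVec, dotProduct, Fin.sum_univ_two] using congrFun hc1 0
  have h11 : M 0 1 1 = c1 * r 1 := by
    simpa [mulVec, dotProduct, Fin.sum_univ_two] using congrFun hc1 1
  have hn := (hnull s).2 ⟨1, by simp⟩
  have hn0 : M 0 0 0 * s 0 + M 0 0 1 * s 1 = 0 := by
    simpa [mulVec, dotProduct, Fin.sum_univ_two] using congrFun hn 0
  have hn1 : M 0 1 0 * s 0 + M 0 1 1 * s 1 = 0 := by
    simpa [mulVec, dotProduct, Fin.sum_univ_two] using congrFun hn 1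
  obtain ⟨ν, hν0, hν1⟩ : ∃ ν : ℂ, c0 = -ν * s 1 ∧ c1 = ν * s 0 := by
    refine perp_aux hs' ?_
    rw [h00, h01] at hn0
    rw [h10, h11] at hn1
    by_contra hc
    have e0 : r 0 = 0 := by
      have : (c0 * s 0 + c1 * s 1) * r 0 = 0 := by linear_combination hn0
      simpa [hc] using this
    have e1 : r 1 = 0 := by
      have : (c0 * s 0 + c1 * s 1) * r 1 = 0 := by linear_combination hn1
      simpa [hc] using this
    exact hr (by ext i; fin_cases i <;> simp [e0, e1])
  rw [hν0, hl0] at h00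
  rw [hν0, hl1] at h10
  rw [hν1, hl0] at h01
  rw [hν1, hl1] at h11
  clear hn hn0 hn1 hc0 hc1 hν0 hν1 hnull hran hM0ne
  rw [det_fin_two_of] at hM0inv
  rw [hsM2s] at hM0inv
  simp only [mulVec, dotProduct, Fin.sum_univ_two, hl0, hl1] at hM0inv hsM1s hsM2s hrM0r ⊢
  have hrr : l * ν * l ^ 2 * (s 0 ^ 2 + s 1 ^ 2) ^ 2 ≠ 0 := by
    convert hrM0r using 1
    rw [h00, h01, h10, h11]; ring
  have hνne : ν ≠ 0 := by rintro rfl; simp at hrr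
  have hss : s 0 ^ 2 + s 1 ^ 2 ≠ 0 := by intro h; simp [h] at hrr
  -- the power series
  set m : Fin 2 → Fin 2 → PowerSeries ℂ := fun i j => PowerSeries.mk fun n => M n i j with hm
  have hG : ∀ i j, Geo (m i j) := fun i j =>
    Geo.of_bound hρ (fun n => by simpa [hm] using hC n i j)
  set d := m 0 0 * m 1 1 - m 0 1 * m 1 0 with hd
  have hGd : Geo d := ((hG _ _).mul (hG _ _)).sub ((hG _ _).mul (hG _ _))
  have hd0 : PowerSeries.coeff 0 d = 0 := by
    simp [hd, hm, PowerSeries.coeff_mul, h00, h01, h10, h11]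
    ring
  have hd1 : PowerSeries.coeff 1 d = 0 := by
    simp [hd, hm, PowerSeries.coeff_mul, Finset.Nat.antidiagonal_succ, h00, h01, h10, h11]
    linear_combination l * ν * hsM1s
  have hd2 : PowerSeries.coeff 2 d = M 1 0 0 * M 1 1 1 - M 1 0 1 * M 1 1 0 := by
    simp [hd, hm, PowerSeries.coeff_mul, Finset.Nat.antidiagonal_succ, h00, h01, h10, h11]
    linear_combination l * ν * hsM2s
  obtain ⟨u, hu⟩ : PowerSeries.X ^ 2 ∣ d := by
    rw [PowerSeries.X_pow_dvd_iff]
    intro k hk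
    interval_cases k <;> assumption
  have hu0 : PowerSeries.constantCoeff u = M 1 0 0 * M 1 1 1 - M 1 0 1 * M 1 1 0 := by
    rw [← hd2, hu]
    have := PowerSeries.coeff_X_pow_mul u 2 0
    simpa using this.symm
  have hGu : Geo u := Geo.of_X_pow_mul (hu ▸ hGd)
  set A := s 0 * (M 1 0 0 * (-l * s 1) + M 1 0 1 * (l * s 0)) +
    s 1 * (M 1 1 0 * (-l * s 1) + M 1 1 1 * (l * s 0)) with hA
  set B := -l * s 1 * (M 1 0 0 * s 0 + M 1 0 1 * s 1) +
    l * s 0 * (M 1 1 0 * s 0 + M 1 1 1 * s 1) with hB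
  have hAB : A * B ≠ 0 := by
    intro h; apply hM0inv; linear_combination -h
  have hdet : A * B = - (l ^ 2 * (s 0 ^ 2 + s 1 ^ 2) ^ 2 *
      (M 1 0 0 * M 1 1 1 - M 1 0 1 * M 1 1 0)) := by
    rw [hA, hB]
    linear_combination (l ^ 2 * (M 1 0 0 * s 1 ^ 2 - M 1 0 1 * s 0 * s 1 - M 1 1 0 * s 0 * s 1
      + M 1 1 1 * s 0 ^ 2)) * hsM1s
  have hune : PowerSeries.constantCoeff u ≠ 0 := by
    rw [hu0]; intro h; rw [h] at hdet; simp at hdet; exact hAB (by rw [mul_eq_zero]; exact hdet)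
  set β : Fin 2 → ℂ := fun i => s i + α * r i with hβ
  set T : Fin 2 → PowerSeries ℂ := ![
    u⁻¹ * (m 1 1 * PowerSeries.C (β 0) - m 0 1 * PowerSeries.C (β 1)),
    u⁻¹ * (m 0 0 * PowerSeries.C (β 1) - m 1 0 * PowerSeries.C (β 0))] with hT
  have hGT : ∀ i, Geo (T i) := by
    intro i
    fin_cases i
    · exact (hGu.inv hune).mul (((hG _ _).mul (Geo.const _)).sub ((hG _ _).mul (Geo.const _)))
    · exact (hGu.inv hune).mul (((hG _ _).mul (Geo.const _)).sub ((hG _ _).mul (Geo.const _)))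
  have huu := PowerSeries.mul_inv_cancel u hune
  have hsol : ∀ i, m i 0 * T 0 + m i 1 * T 1 = PowerSeries.X ^ 2 * PowerSeries.C (β i) := by
    have hu' : m 0 0 * m 1 1 - m 0 1 * m 1 0 = PowerSeries.X ^ 2 * u := by rw [← hd, hu]
    intro i
    fin_cases i
    · simp only [hT, Fin.zero_eta, cons_val_zero, cons_val_one]
      linear_combination u⁻¹ * PowerSeries.C (β 0) * hu' +
        PowerSeries.X ^ 2 * PowerSeries.C (β 0) * huu
    · simp only [hT, Fin.mk_one, cons_val_zero, cons_val_one]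
      linear_combination u⁻¹ * PowerSeries.C (β 1) * hu' +
        PowerSeries.X ^ 2 * PowerSeries.C (β 1) * huu
  have ht0 : (fun i => PowerSeries.coeff 0 (T i)) =
      (-((s 0 * s 0 + s 1 * s 1) * (-l * s 1 * (M 0 0 0 * (-l * s 1) + M 0 0 1 * (l * s 0)) +
        l * s 0 * (M 0 1 0 * (-l * s 1) + M 0 1 1 * (l * s 0)))) / (A * B)) • s := by
    have hD : M 1 0 0 * M 1 1 1 - M 1 0 1 * M 1 1 0 ≠ 0 := hu0 ▸ hune
    rw [hdet]
    ext i
    fin_cases i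
    · simp [hT, hm, hu0, hβ, hl0, hl1, h00, h01, h10, h11]
      field_simp
      ring
    · simp [hT, hm, hu0, hβ, hl0, hl1, h00, h01, h10, h11]
      field_simp
      ring
  refine ⟨fun n i => PowerSeries.coeff n (T i), ?_, ?_, ht0, ?_⟩
  · obtain ⟨K, R, hK, hR, h⟩ := hGT 0
    obtain ⟨L, S, hL, hS, h'⟩ := hGT 1
    have hX : 0 < max R S := lt_of_lt_of_le (by linarith) (le_max_left R S)
    refine ⟨max K L, (max R S)⁻¹, by positivity, fun n i => ?_⟩
    rw [inv_pow, div_inv_eq_mul]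
    fin_cases i
    · exact (h n).trans (mul_le_mul (le_max_left _ _)
        (pow_le_pow_left₀ (by linarith) (le_max_left _ _) n) (by positivity) (by positivity))
    · exact (h' n).trans (mul_le_mul (le_max_right _ _)
        (pow_le_pow_left₀ (by linarith) (le_max_right _ _) n) (by positivity) (by positivity))
  · intro n
    ext i
    have := congrArg (PowerSeries.coeff n) (hsol i)
    rw [map_add, PowerSeries.coeff_mul, PowerSeries.coeff_mul,
      Finset.Nat.sum_antidiagonal_eq_sum_range_succ_mk,
      Finset.Nat.sum_antidiagonal_eq_sum_range_succ_mk, ← Finset.sum_add_distrib] at this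
    rw [Finset.sum_apply, hb]
    simp only [hm, PowerSeries.coeff_mk] at this
    simp only [Fin.sum_univ_two, mulVec, dotProduct]
    rw [this, PowerSeries.coeff_mul_C, PowerSeries.coeff_X_pow]
    split_ifs <;> simp [hβ]
  · beta_reduce
    rw [ht0]
    refine smul_ne_zero (div_ne_zero (neg_ne_zero.2 (mul_ne_zero ?_ hrM0r)) hAB) hs
    intro h; apply hss; linear_combination h
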